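/- Let (A, 𝔪, k) be a commutative Noetherian local ring and let M be a finitely generated A-module having free reducible complexity. Then M has finite projective dimension if and only if Ext^i_A(M,N) = 0 for every finitely generated A-module N having free reducible complexity with cx N = 1 and all i ≫ 0. -/

import Mathlib

open CategoryTheory Opposite Filter IsLocalRing

universe u

namespace ComplexityTest

variable (A : Type u) [CommRing A] [IsLocalRing A]

structure MinFreeRes (M : Type u) [AddCommGroup M] [Module A M] : Type u where
  b : ℕ → ℕ
  d : (n : ℕ) → ((Fin (b (n + 1)) → A) →ₗ[A] (Fin (b n) → A))
  aug : (Fin (b 0) → A) →ₗ[A] M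
  aug_surjective : Function.Surjective aug
  exact_zero : Function.Exact (d 0) aug
  exact_succ : ∀ n, Function.Exact (d (n + 1)) (d n)
  minimal : ∀ n x i, d n x i ∈ maximalIdeal A

variable (M : Type u) [AddCommGroup M] [Module A M]

def HasComplexityLE (t : ℕ) : Prop :=
  ∃ (R : MinFreeRes A M) (a : ℝ), ∀ᶠ n : ℕ in atTop, (R.b n : ℝ) ≤ a * (n : ℝ) ^ ((t : ℤ) - 1)

noncomputable def complexity : ℕ∞ :=
  sInf {c : ℕ∞ | ∃ t : ℕ, c = t ∧ HasComplexityLE A M t}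

def HasProjDimLE (t : ℕ) : Prop :=
  ∃ R : MinFreeRes A M, ∀ i, t < i → R.b i = 0

noncomputable def projDim : ℕ∞ :=
  sInf {c : ℕ∞ | ∃ t : ℕ, c = t ∧ HasProjDimLE A M t}

def HasFiniteProjDim : Prop :=
  ∃ t : ℕ, HasProjDimLE A M t

def IsSyzygyOf (S : Type u) [AddCommGroup S] [Module A S] : ℕ → Prop
  | 0 => Nonempty (S ≃ₗ[A] M)
  | 1 => ∃ R : MinFreeRes A M, Nonempty (S ≃ₗ[A] (LinearMap.ker R.aug))
  | (n + 2) => ∃ R : MinFreeRes A M, Nonempty (S ≃ₗ[A] (LinearMap.ker (R.d n)))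

variable {A M} in
def IsSES {K S : Type u} [AddCommGroup K] [Module A K] [AddCommGroup S] [Module A S]
    (f : M →ₗ[A] K) (g : K →ₗ[A] S) : Prop :=
  Function.Injective f ∧ Function.Exact f g ∧ Function.Surjective g

noncomputable def extModule (n : ℕ) (N : Type u) [AddCommGroup N] [Module A N] :
    ModuleCat A :=
  ((_root_.Ext A (ModuleCat.{u} A) n).obj (op (ModuleCat.of A M))).obj (ModuleCat.of A N)

def extVanish (n : ℕ) (N : Type u) [AddCommGroup N] [Module A N] : Prop :=
  Subsingleton (extModule A M n N)

/-- The `n`-th Tor module `Tor^A_n(M, N)`. -/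
noncomputable def torModule (n : ℕ) (N : Type u) [AddCommGroup N] [Module A N] :
    ModuleCat A :=
  ((Tor (ModuleCat.{u} A) n).obj (ModuleCat.of A M)).obj (ModuleCat.of A N)

/-- The vanishing `Tor^A_n(M, N) = 0`. -/
def torVanish (n : ℕ) (N : Type u) [AddCommGroup N] [Module A N] : Prop :=
  Subsingleton (torModule A M n N)

noncomputable def depth : ℕ∞ :=
  sInf {c : ℕ∞ | ∃ i : ℕ, c = i ∧ ¬ extVanish A (ResidueField A) i M}

variable {A}

/-- The category of modules of *free reducible complexity* over the local ring `A`.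
It is defined inductively: every finitely generated module of finite projective
dimension has free reducible complexity, and a finitely generated module `M` of finite
positive complexity has free reducible complexity provided there is a short exact
sequence `0 → M → K → Ω^n_A(M) → 0` (necessarily induced by a cohomology element
`η ∈ Ext^{n+1}_A(M,M)`) where `K` is a finitely generated module of free reducible
complexity with `cx K = cx M - 1`. -/
inductive HasFreeRedCxCat : ModuleCat.{u} A → Prop
  | of_finite_projDim (M : ModuleCat.{u} A) (hfg : Module.Finite A M)
      (h : HasFiniteProjDim A M) : HasFreeRedCxCat M
  | step (M K S : ModuleCat.{u} A) (n : ℕ)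
      (hfg : Module.Finite A M) (hKfg : Module.Finite A K)
      (hpos : 0 < complexity A M) (hfin : complexity A M ≠ ⊤)
      (hsyz : IsSyzygyOf A M S n)
      (f : M →ₗ[A] K) (g : K →ₗ[A] S) (hses : IsSES f g)
      (hcx : complexity A K = complexity A M - 1)
      (hK : HasFreeRedCxCat K) : HasFreeRedCxCat M

/-- The category of modules of *reducible complexity* over the local ring `A`: as for
free reducible complexity, but where in addition the reductions are required to
preserve depth. -/
inductive HasRedCxCat : ModuleCat.{u} A → Prop
  | of_finite_projDim (M : ModuleCat.{u} A) (hfg : Module.Finite A M)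
      (h : HasFiniteProjDim A M) : HasRedCxCat M
  | step (M K S : ModuleCat.{u} A) (n : ℕ)
      (hfg : Module.Finite A M) (hKfg : Module.Finite A K)
      (hpos : 0 < complexity A M) (hfin : complexity A M ≠ ⊤)
      (hsyz : IsSyzygyOf A M S n)
      (f : M →ₗ[A] K) (g : K →ₗ[A] S) (hses : IsSES f g)
      (hcx : complexity A K = complexity A M - 1)
      (hdepth : depth A K = depth A M)
      (hK : HasRedCxCat K) : HasRedCxCat M

variable (A)

/-- `M` has free reducible complexity. -/
def HasFreeRedCx (M : Type u) [AddCommGroup M] [Module A M] : Prop :=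
  HasFreeRedCxCat (ModuleCat.of A M)

/-- `M` has reducible complexity. -/
def HasRedCx (M : Type u) [AddCommGroup M] [Module A M] : Prop :=
  HasRedCxCat (ModuleCat.of A M)

/-- A Noetherian local ring is Gorenstein if it has finite injective dimension over
itself; by Bass' characterization, this is equivalent to the vanishing of
`Ext^i_A(k, A)` for all sufficiently large `i`. -/
def IsGorenstein : Prop :=
  ∃ n : ℕ, ∀ i : ℕ, n < i → extVanish A (ResidueField A) i A

end ComplexityTest

open ComplexityTest

/-!
Suppose `Ext^i(M, N) = 0` for `i ≫ 0` and every `N` as in the theorem, and let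
`0 → M → K → Ω^n M → 0` be a reduction of `M`. Eventual vanishing of `Ext(-, N)` passes from `M`
to its syzygies and then to `K`, so by induction `K` has finite projective dimension. Hence
`cx M = 1`, so `M` itself is one of the test modules and `Ext^i(M, M) = 0` for `i ≫ 0`. The
long exact sequence shows that the class `η ∈ Ext^{n+1}(M, M)` of the reduction acts surjectively
on `Ext^i(M, -)` for `i ≫ 0`, and so does each of its powers. These powers eventually vanish,
whence `Ext^i(M, -) = 0` for `i ≫ 0`.
-/

section Ext

universe v w w'

variable {C : Type w} [Category.{v} C] [Abelian C] [HasExt.{w'} C]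

/-- `Ext^i(X, Y) = 0` for all `i ≫ 0`. -/
def ExtEventuallyVanishes (X Y : C) : Prop :=
  ∀ᶠ i in atTop, Subsingleton (Abelian.Ext X Y i)

lemma ExtEventuallyVanishes.of_hasProjectiveDimensionLT (X Y : C) (n : ℕ)
    [HasProjectiveDimensionLT X n] : ExtEventuallyVanishes X Y :=
  (eventually_ge_atTop n).mono fun i hi => HasProjectiveDimensionLT.subsingleton X n i hi Y

section ShortExact

variable {S : ShortComplex C} {Y : C}

lemma ExtEventuallyVanishes.X₁ (hS : S.ShortExact) (h₂ : ExtEventuallyVanishes S.X₂ Y)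
    (h₃ : ExtEventuallyVanishes S.X₃ Y) : ExtEventuallyVanishes S.X₁ Y := by
  filter_upwards [h₂, (tendsto_add_atTop_nat 1).eventually h₃] with i _ _
  refine subsingleton_of_forall_eq 0 fun x => ?_
  obtain ⟨y, rfl⟩ := Abelian.Ext.contravariant_sequence_exact₁ hS Y x (add_comm 1 i)
    (Subsingleton.elim _ _)
  rw [Subsingleton.elim y 0, Abelian.Ext.comp_zero]

lemma ExtEventuallyVanishes.X₂ (hS : S.ShortExact) (h₁ : ExtEventuallyVanishes S.X₁ Y)
    (h₃ : ExtEventuallyVanishes S.X₃ Y) : ExtEventuallyVanishes S.X₂ Y := by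
  filter_upwards [h₁, h₃] with i _ _
  refine subsingleton_of_forall_eq 0 fun x => ?_
  obtain ⟨y, rfl⟩ := Abelian.Ext.contravariant_sequence_exact₂ hS Y x (Subsingleton.elim _ _)
  rw [Subsingleton.elim y 0, Abelian.Ext.comp_zero]

end ShortExact

/-- The class `θ ∈ Ext^m(X, X')` induces surjections `Ext^i(X', Y) → Ext^{m+i}(X, Y)` for all
`i ≫ 0`, uniformly in `Y`. The target degree is a variable `k` with `m + i = k` so that no casts
between `Ext` groups are needed. -/
def PrecompEventuallySurjective {X X' : C} {m : ℕ} (θ : Abelian.Ext X X' m) : Prop :=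
  ∀ᶠ i in atTop, ∀ (Y : C) (k : ℕ) (h : m + i = k), Function.Surjective (θ.precomp Y h)

namespace PrecompEventuallySurjective

lemma mk₀_id (X : C) : PrecompEventuallySurjective (Abelian.Ext.mk₀ (𝟙 X)) :=
  Eventually.of_forall fun i Y k h x => by
    obtain rfl : i = k := by omega
    exact ⟨x, Abelian.Ext.mk₀_id_comp x⟩

lemma comp {X X' X'' : C} {m m' n : ℕ} {θ : Abelian.Ext X X' m} {θ' : Abelian.Ext X' X'' m'}
    (hθ : PrecompEventuallySurjective θ) (hθ' : PrecompEventuallySurjective θ')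
    (hn : m + m' = n) : PrecompEventuallySurjective (θ.comp θ' hn) := by
  filter_upwards [(tendsto_add_atTop_nat m').eventually hθ, hθ'] with i hi hi' Y k h x
  obtain ⟨y, rfl⟩ := hi Y k (by omega) x
  obtain ⟨z, rfl⟩ := hi' Y (i + m') (add_comm m' i) y
  exact ⟨z, Abelian.Ext.comp_assoc _ _ _ _ (add_comm m' i) (by omega)⟩

lemma extClass {S : ShortComplex C} (hS : S.ShortExact) (n : ℕ)
    (h₂ : HasProjectiveDimensionLT S.X₂ n) : PrecompEventuallySurjective hS.extClass :=
  (eventually_ge_atTop n).mono fun _ _ Y _ h x =>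
    Abelian.Ext.contravariant_sequence_exact₃ hS Y x
      (Abelian.Ext.eq_zero_of_hasProjectiveDimensionLT _ n (by omega)) h

lemma exists_pow {X : C} {m : ℕ} {θ : Abelian.Ext X X m} (hθ : PrecompEventuallySurjective θ)
    (r : ℕ) : ∃ φ : Abelian.Ext X X (r * m), PrecompEventuallySurjective φ := by
  induction r with
  | zero => rw [Nat.zero_mul]; exact ⟨_, mk₀_id X⟩
  | succ r ih =>
    obtain ⟨φ, hφ⟩ := ih
    exact ⟨φ.comp θ (Nat.succ_mul r m).symm, hφ.comp hθ _⟩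

lemma exists_hasProjectiveDimensionLT_of_zero {X X' : C} {m : ℕ}
    (h : PrecompEventuallySurjective (0 : Abelian.Ext X X' m)) :
    ∃ n, HasProjectiveDimensionLT X n := by
  obtain ⟨p, hp⟩ := eventually_atTop.1 h
  refine ⟨m + p, HasProjectiveDimensionLT.mk fun k hk Y x => ?_⟩
  obtain ⟨y, rfl⟩ := hp (k - m) (by omega) Y k (by omega) x
  exact Abelian.Ext.zero_comp X m y k (by omega)

lemma exists_hasProjectiveDimensionLT {X : C} {m : ℕ} {θ : Abelian.Ext X X m}
    (hθ : PrecompEventuallySurjective θ) (hm : 0 < m) (hX : ExtEventuallyVanishes X X) :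
    ∃ n, HasProjectiveDimensionLT X n := by
  obtain ⟨r, hr⟩ := ((tendsto_id.atTop_mul_const' hm).eventually hX).exists
  obtain ⟨φ, hφ⟩ := hθ.exists_pow r
  obtain rfl : φ = 0 := hr.elim _ _
  exact hφ.exists_hasProjectiveDimensionLT_of_zero

end PrecompEventuallySurjective

end Ext

section Modules

variable {A : Type u} [CommRing A]

lemma extVanish_succ_iff_subsingleton_ext (M N : Type u) [AddCommGroup M] [Module A M]
    [AddCommGroup N] [Module A N] (p : ℕ) :
    extVanish A M (p + 1) N ↔
      Subsingleton (Abelian.Ext (ModuleCat.of A M) (ModuleCat.of A N) (p + 1)) := by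
  let P := projectiveResolution (ModuleCat.of A M)
  let CocyclesAreCoboundaries : Prop :=
    ∀ f : P.complex.X (p + 1) ⟶ ModuleCat.of A N, P.complex.d (p + 2) (p + 1) ≫ f = 0 →
      ∃ g : P.complex.X p ⟶ ModuleCat.of A N, P.complex.d (p + 1) p ≫ g = f
  have extVanish_iff : extVanish A M (p + 1) N ↔ CocyclesAreCoboundaries := by
    unfold extVanish extModule
    rw [← ModuleCat.isZero_iff_subsingleton,
      (P.isoExt (R := A) (p + 1) (ModuleCat.of A N)).isZero_iff,
      ← HomologicalComplex.exactAt_iff_isZero_homology,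
      HomologicalComplex.exactAt_iff' _ p (p + 1) (p + 2) (by simp) (by simp),
      ShortComplex.moduleCat_exact_iff]
    rfl
  rw [extVanish_iff]
  constructor
  · intro h
    refine subsingleton_of_forall_eq 0 fun α => ?_
    obtain ⟨f, hf, rfl⟩ := P.extMk_surjective α (p + 2) rfl
    exact (P.extMk_eq_zero_iff f (p + 2) rfl hf p rfl).2 (h f hf)
  · intro h f hf
    exact (P.extMk_eq_zero_iff f (p + 2) rfl hf p rfl).1 (Subsingleton.elim _ _)

lemma eventually_extVanish_iff (M N : Type u) [AddCommGroup M] [Module A M]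
    [AddCommGroup N] [Module A N] :
    (∀ᶠ i in atTop, extVanish A M i N) ↔
      ExtEventuallyVanishes (ModuleCat.of A M) (ModuleCat.of A N) := by
  refine eventually_congr ((eventually_ge_atTop 1).mono fun i hi => ?_)
  obtain ⟨p, rfl⟩ := Nat.exists_eq_add_of_le' hi
  exact extVanish_succ_iff_subsingleton_ext M N p

lemma mem_ideal_smul_top_of_forall_mem {ι : Type*} [Finite ι] {I : Ideal A} {x : ι → A}
    (h : ∀ i, x i ∈ I) : x ∈ I • (⊤ : Submodule A (ι → A)) := by
  classical
  have := Fintype.ofFinite ι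
  rw [pi_eq_sum_univ' x]
  exact Submodule.sum_mem _ fun i _ => Submodule.smul_mem_smul (h i) trivial

lemma subsingleton_of_leftInverse_of_mem_smul_top {N F : Type*} [AddCommGroup N] [Module A N]
    [Module.Finite A N] [AddCommGroup F] [Module A F] {I : Ideal A} (hI : I ≤ Ideal.jacobson ⊥)
    {f : N →ₗ[A] F} {r : F →ₗ[A] N} (hr : Function.LeftInverse r f)
    (hf : ∀ z, f z ∈ I • (⊤ : Submodule A F)) : Subsingleton N := by
  have top_le : (⊤ : Submodule A N) ≤ I • ⊤ := fun z _ => by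
    have hz := Submodule.mem_map_of_mem (f := r) (hf z)
    rw [hr z, Submodule.map_smul''] at hz
    exact Submodule.smul_mono le_rfl le_top hz
  exact (Submodule.subsingleton_iff A).1 <| subsingleton_of_bot_eq_top <| Eq.symm <|
    Submodule.eq_bot_of_le_smul_of_le_jacobson_bot I ⊤ Module.Finite.fg_top top_le hI

namespace ComplexityTest

section IsSES

variable {M K S : Type u} [AddCommGroup M] [Module A M] [AddCommGroup K] [Module A K]
  [AddCommGroup S] [Module A S] {f : M →ₗ[A] K} {g : K →ₗ[A] S}

/-- The short complex in `ModuleCat A` underlying an exact sequence `0 → M → K → S → 0`. -/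
abbrev IsSES.shortComplex (h : IsSES f g) : ShortComplex (ModuleCat.{u} A) :=
  ModuleCat.shortComplexOfCompEqZero f g h.2.1.linearMap_comp_eq_zero

lemma IsSES.shortExact (h : IsSES f g) : h.shortComplex.ShortExact :=
  ModuleCat.shortComplex_shortExact _ h.2.1 h.1 h.2.2

lemma IsSES.comp_linearEquiv {S' : Type u} [AddCommGroup S'] [Module A S'] (h : IsSES f g)
    (e : S ≃ₗ[A] S') : IsSES f (e.toLinearMap ∘ₗ g) :=
  ⟨h.1, h.2.1.comp_injective e e.injective e.map_zero, e.surjective.comp h.2.2⟩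

end IsSES

variable [IsLocalRing A]

namespace MinFreeRes

variable {M : Type u} [AddCommGroup M] [Module A M] (R : MinFreeRes A M)

/-- The target of the `n`-th map of the augmented resolution `⋯ → F₁ → F₀ → M`. -/
def target : ℕ → ModuleCat.{u} A
  | 0 => ModuleCat.of A M
  | n + 1 => ModuleCat.of A (Fin (R.b n) → A)

/-- The `n`-th map of the augmented resolution `⋯ → F₁ → F₀ → M`, so that `augD 0` is the
augmentation and `augD (n + 1)` is `d n`. -/
def augD : (n : ℕ) → (Fin (R.b n) → A) →ₗ[A] R.target n
  | 0 => R.aug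
  | n + 1 => R.d n

lemma exact_d_augD : ∀ n, Function.Exact (R.d n) (R.augD n)
  | 0 => R.exact_zero
  | n + 1 => R.exact_succ n

/-- The `n`-th syzygy of `M` computed by the minimal free resolution `R`. -/
def syz : ℕ → ModuleCat.{u} A
  | 0 => ModuleCat.of A M
  | n + 1 => ModuleCat.of A (LinearMap.ker (R.augD n))

/-- The inclusion `Ω^{n+1} M → F_n`. -/
def syzIncl (n : ℕ) : R.syz (n + 1) →ₗ[A] (Fin (R.b n) → A) :=
  (LinearMap.ker (R.augD n)).subtype

/-- The free cover `F_n → Ω^n M`. -/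
def syzCover : (n : ℕ) → (Fin (R.b n) → A) →ₗ[A] R.syz n
  | 0 => R.aug
  | n + 1 => (R.d n).codRestrict _ fun x => (R.exact_d_augD n).apply_apply_eq_zero x

lemma ker_syzCover (n : ℕ) : LinearMap.ker (R.syzCover n) = LinearMap.ker (R.augD n) := by
  cases n with
  | zero => rfl
  | succ n => exact LinearMap.ker_codRestrict ..

lemma syzCover_surjective : ∀ n, Function.Surjective (R.syzCover n)
  | 0 => R.aug_surjective
  | n + 1 => fun ⟨z, hz⟩ => by
    obtain ⟨y, rfl⟩ := (R.exact_d_augD n z).1 hz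
    exact ⟨y, rfl⟩

lemma isSES_syz (n : ℕ) : IsSES (R.syzIncl n) (R.syzCover n) :=
  ⟨Subtype.val_injective,
    LinearMap.exact_iff.2 ((R.ker_syzCover n).trans (Submodule.range_subtype _).symm),
    R.syzCover_surjective n⟩

lemma syzIncl_mem_maximalIdeal_smul_top (n : ℕ) (z : R.syz (n + 1)) :
    R.syzIncl n z ∈ maximalIdeal A • (⊤ : Submodule A (Fin (R.b n) → A)) := by
  obtain ⟨y, hy⟩ := (R.exact_d_augD n z.1).1 z.2
  have hy' : R.d n y = R.syzIncl n z := hy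
  rw [← hy']
  exact mem_ideal_smul_top_of_forall_mem (R.minimal n y)

instance (n : ℕ) : Module.Finite A (R.syz n) :=
  Module.Finite.of_surjective _ (R.syzCover_surjective n)

instance (n : ℕ) : Projective (R.isSES_syz n).shortComplex.X₂ :=
  ModuleCat.projective_of_free (Pi.basisFun A (Fin (R.b n)))

lemma hasProjectiveDimensionLT_syz_iff (m c : ℕ) :
    HasProjectiveDimensionLT (R.syz m) (c + 1) ↔
      HasProjectiveDimensionLT (ModuleCat.of A M) (m + c + 1) := by
  induction m generalizing c with
  | zero => rw [zero_add]; rfl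
  | succ m ih =>
    rw [Nat.add_right_comm m 1 c, add_assoc m c 1, ← ih]
    exact ((R.isSES_syz m).shortExact.hasProjectiveDimensionLT_X₃_iff c inferInstance).symm

lemma subsingleton_syz_succ_of_projective (n : ℕ) (h : Projective (R.syz n)) :
    Subsingleton (R.syz (n + 1)) := by
  have : Projective (R.isSES_syz n).shortComplex.X₃ := h
  let σ := (R.isSES_syz n).shortExact.splittingOfProjective
  exact subsingleton_of_leftInverse_of_mem_smul_top (maximalIdeal_le_jacobson ⊥)
    (r := σ.r.hom) (fun z => ConcreteCategory.congr_hom σ.f_r z)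
    (R.syzIncl_mem_maximalIdeal_smul_top n)

lemma b_eq_zero_iff_subsingleton_syz (n : ℕ) : R.b n = 0 ↔ Subsingleton (R.syz n) := by
  constructor
  · intro h
    have : IsEmpty (Fin (R.b n)) := by rw [h]; infer_instance
    exact (R.syzCover_surjective n).subsingleton
  · intro h
    have hproj : Projective (R.syz n) := (ModuleCat.isZero_of_subsingleton _).projective
    have := R.subsingleton_syz_succ_of_projective n hproj
    have hF : Subsingleton (Fin (R.b n) → A) := subsingleton_of_forall_eq 0 fun x => by
      obtain ⟨z, rfl⟩ := ((R.isSES_syz n).2.1 x).1 (Subsingleton.elim _ _)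
      rw [Subsingleton.elim z 0, map_zero]
    by_contra hb
    have : Nonempty (Fin (R.b n)) := ⟨⟨0, Nat.pos_of_ne_zero hb⟩⟩
    exact not_subsingleton _ hF

lemma extEventuallyVanishes_syz {Y : ModuleCat.{u} A}
    (h : ExtEventuallyVanishes (ModuleCat.of A M) Y) (n : ℕ) :
    ExtEventuallyVanishes (R.syz n) Y := by
  induction n with
  | zero => exact h
  | succ n ih =>
    exact .X₁ (R.isSES_syz n).shortExact (.of_hasProjectiveDimensionLT _ _ 1) ih

lemma exists_ext_syz_precompEventuallySurjective (n : ℕ) :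
    ∃ θ : Abelian.Ext (ModuleCat.of A M) (R.syz n) n, PrecompEventuallySurjective θ := by
  induction n with
  | zero => exact ⟨_, .mk₀_id _⟩
  | succ n ih =>
    obtain ⟨θ, hθ⟩ := ih
    exact ⟨_, hθ.comp (.extClass (R.isSES_syz n).shortExact 1 inferInstance) rfl⟩

end MinFreeRes

section

variable {M : Type u} [AddCommGroup M] [Module A M]

lemma HasFiniteProjDim.exists_hasProjectiveDimensionLT (h : HasFiniteProjDim A M) :
    ∃ n, HasProjectiveDimensionLT (ModuleCat.of A M) n := by
  obtain ⟨t, R, hR⟩ := h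
  have := (R.b_eq_zero_iff_subsingleton_syz (t + 1)).1 (hR _ t.lt_succ_self)
  have := (ModuleCat.isZero_of_subsingleton (R.syz (t + 1))).hasProjectiveDimensionLT_zero
  exact ⟨_, (R.hasProjectiveDimensionLT_syz_iff (t + 1) 0).1
    (hasProjectiveDimensionLT_of_ge _ 0 _ (by omega))⟩

lemma HasFiniteProjDim.of_exists_hasProjectiveDimensionLT (R : MinFreeRes A M)
    (h : ∃ n, HasProjectiveDimensionLT (ModuleCat.of A M) n) : HasFiniteProjDim A M := by
  obtain ⟨p, hp⟩ := h
  refine ⟨p, R, fun i hi => ?_⟩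
  obtain ⟨n, rfl⟩ := Nat.exists_eq_add_of_lt hi
  have hproj : Projective (R.syz (p + n)) := projective_iff_hasProjectiveDimensionLT_one.2 <|
    (R.hasProjectiveDimensionLT_syz_iff _ 0).2 (hasProjectiveDimensionLT_of_ge _ p _ (by omega))
  exact (R.b_eq_zero_iff_subsingleton_syz _).2 (R.subsingleton_syz_succ_of_projective _ hproj)

lemma HasFiniteProjDim.complexity_eq_zero (h : HasFiniteProjDim A M) : complexity A M = 0 := by
  obtain ⟨t, R, hR⟩ := h
  refine nonpos_iff_eq_zero.1 (sInf_le ⟨0, rfl, R, 0, ?_⟩)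
  filter_upwards [eventually_gt_atTop t] with n hn
  simp [hR n hn]

lemma nonempty_minFreeRes_of_complexity_ne_top (h : complexity A M ≠ ⊤) :
    Nonempty (MinFreeRes A M) := by
  contrapose! h
  exact sInf_eq_top.2 fun _ ⟨_, _, R, _⟩ => isEmptyElim R

lemma IsSyzygyOf.exists_linearEquiv_syz {S : Type u} [AddCommGroup S] [Module A S] {n : ℕ}
    (h : IsSyzygyOf A M S n) (hM : complexity A M ≠ ⊤) :
    ∃ R : MinFreeRes A M, Nonempty (S ≃ₗ[A] R.syz n) := by
  match n with
  | 0 => exact (nonempty_minFreeRes_of_complexity_ne_top hM).elim fun R => ⟨R, h⟩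
  | 1 | _ + 2 => exact h

end

section

variable {M : Type u} [AddCommGroup M] [Module A M] {R : MinFreeRes A M} {n : ℕ}
  {K : Type u} [AddCommGroup K] [Module A K] {f : M →ₗ[A] K} {g : K →ₗ[A] R.syz n}

lemma IsSES.extEventuallyVanishes_reduction (h : IsSES f g) {Y : ModuleCat.{u} A}
    (hM : ExtEventuallyVanishes (ModuleCat.of A M) Y) :
    ExtEventuallyVanishes (ModuleCat.of A K) Y :=
  .X₂ h.shortExact hM (R.extEventuallyVanishes_syz hM n)

lemma IsSES.hasFiniteProjDim_of_reduction (h : IsSES f g) (hK : HasFiniteProjDim A K)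
    (hM : ExtEventuallyVanishes (ModuleCat.of A M) (ModuleCat.of A M)) :
    HasFiniteProjDim A M := by
  obtain ⟨p, hp⟩ := hK.exists_hasProjectiveDimensionLT
  obtain ⟨θ, hθ⟩ := R.exists_ext_syz_precompEventuallySurjective n
  have hη : PrecompEventuallySurjective (θ.comp h.shortExact.extClass rfl) :=
    hθ.comp (.extClass h.shortExact p hp) rfl
  exact .of_exists_hasProjectiveDimensionLT R (hη.exists_hasProjectiveDimensionLT n.succ_pos hM)

end

lemma HasFreeRedCxCat.module_finite {M : ModuleCat.{u} A} (hM : HasFreeRedCxCat M) :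
    Module.Finite A M := by
  cases hM <;> assumption

lemma HasFreeRedCxCat.hasFiniteProjDim_of_extEventuallyVanishes {M : ModuleCat.{u} A}
    (hM : HasFreeRedCxCat M)
    (h : ∀ N : ModuleCat.{u} A, HasFreeRedCxCat N → complexity A N = 1 →
      ExtEventuallyVanishes M N) :
    HasFiniteProjDim A M := by
  induction hM with
  | of_finite_projDim M _ hM => exact hM
  | step M K S n hfg hKfg hpos hfin hsyz f g hses hcx hK ih =>
    obtain ⟨R, ⟨e⟩⟩ := hsyz.exists_linearEquiv_syz hfin
    have hses' := hses.comp_linearEquiv e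
    have hKpd : HasFiniteProjDim A K :=
      ih fun N hN hN₁ => hses'.extEventuallyVanishes_reduction (h N hN hN₁)
    have hM₁ : complexity A M = 1 := by
      rw [hKpd.complexity_eq_zero] at hcx
      exact le_antisymm (tsub_eq_zero_iff_le.1 hcx.symm) (Order.one_le_iff_pos.2 hpos)
    have hM : HasFreeRedCxCat M := .step M K S n hfg hKfg hpos hfin hsyz f g hses hcx hK
    exact hses'.hasFiniteProjDim_of_reduction hKpd (h M hM hM₁)

end ComplexityTest

end Modules

theorem hasFiniteProjDim_iff_extVanish_against_frc_one_general
    (A : Type u) [CommRing A] [IsLocalRing A]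
    (M : Type u) [AddCommGroup M] [Module A M] (hM : HasFreeRedCx A M) :
    HasFiniteProjDim A M ↔
      ∀ (N : Type u) [AddCommGroup N] [Module A N] [Module.Finite A N],
        HasFreeRedCx A N → complexity A N = 1 →
          ∀ᶠ i in Filter.atTop, extVanish A M i N := by
  simp only [eventually_extVanish_iff]
  constructor
  · intro h N _ _ _ _ _
    obtain ⟨n, _⟩ := h.exists_hasProjectiveDimensionLT
    exact .of_hasProjectiveDimensionLT _ _ n
  · intro h
    refine HasFreeRedCxCat.hasFiniteProjDim_of_extEventuallyVanishes hM fun N hN hN₁ => ?_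
    have := hN.module_finite
    exact h N hN hN₁

/-- **Corollary 3.3**: a module `M` of free reducible complexity over the local ring `A`
has finite projective dimension if and only if `Ext^i_A(M,N) = 0` for `i ≫ 0` for every
module `N` of free reducible complexity with `cx N = 1`. -/
theorem hasFiniteProjDim_iff_extVanish_against_frc_one
    (A : Type u) [CommRing A] [IsLocalRing A] [IsNoetherianRing A]
    (M : Type u) [AddCommGroup M] [Module A M] [Module.Finite A M]
    (hM : HasFreeRedCx A M) :
    HasFiniteProjDim A M ↔
      ∀ (N : Type u) [AddCommGroup N] [Module A N] [Module.Finite A N],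
        HasFreeRedCx A N → complexity A N = 1 →
          ∀ᶠ i in Filter.atTop, extVanish A M i N :=
  hasFiniteProjDim_iff_extVanish_against_frc_one_general A M hM
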